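/- If G ∈ F_q^{m×n} is triorthogonal with parameter k, then for every u ∈ F_q^m, setting f := Σ_{a=1}^m u_a g^a ∈ F_q^n (an arbitrary element of the row span 𝒢), one has Σ_{i=1}^n f_i^7 = Σ_{a=1}^k u_a^7, with all arithmetic in F_q. -/

import Mathlib

open scoped Classical

noncomputable section

/-- A matrix `G ∈ F^{m×n}` (rows `G a`) is *triorthogonal* with parameter `k`
and weights `σ : Fin n → F`, `τ : Fin k → F` (all nonzero) if
(i) `∑ i, (G a i)^4 (G b i)^2 (G c i)` is `1` when `a = b = c` is among the first `k`
rows and `0` otherwise, and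
(ii) `∑ i, σ i * G a i * G b i` is `τ a` when `a = b` is among the first `k` rows and
`0` otherwise. -/
def IsTriorthogonal {F : Type} [Field F] {m n k : ℕ} (G : Fin m → Fin n → F)
    (σ : Fin n → F) (τ : Fin k → F) : Prop :=
  (∀ i, σ i ≠ 0) ∧ (∀ a, τ a ≠ 0) ∧
  (∀ a b c : Fin m, ∑ i, (G a i) ^ 4 * (G b i) ^ 2 * (G c i) =
      if a = b ∧ b = c ∧ (a : ℕ) < k then 1 else 0) ∧
  (∀ a b : Fin m, ∑ i, σ i * G a i * G b i =
      if h : a = b ∧ (a : ℕ) < k then τ ⟨(a : ℕ), h.2⟩ else 0)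

/-!
In exponential characteristic `p` the maps `x ↦ x ^ p ^ 2` and `x ↦ x ^ p` are ring homomorphisms,
so `x ^ (p ^ 2 + p + 1) = x ^ p ^ 2 * x ^ p * x` is a product of three ring homomorphisms. Summing
it over the entries of `f = ∑ a, u a • G a` gives an expression that is additive separately in each
of three copies of `f`; a triorthogonal matrix is one on whose rows the corresponding three-argument
form is diagonal. Seventh powers are the case `p = 2`.
-/

section TripleProducts

variable {R S ι κ : Type*} [CommSemiring R] [CommSemiring S] [Fintype ι] [Fintype κ]
  (φ ψ χ : R →+* S) (G : ι → κ → R) (u : ι → R)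

theorem sum_map_mul_map_mul_map_linearCombination :
    ∑ i, φ (∑ a, u a * G a i) * ψ (∑ a, u a * G a i) * χ (∑ a, u a * G a i) =
      ∑ a, ∑ b, ∑ c, φ (u a) * ψ (u b) * χ (u c) *
        ∑ i, φ (G a i) * ψ (G b i) * χ (G c i) := by
  have expand (i : κ) :
      φ (∑ a, u a * G a i) * ψ (∑ a, u a * G a i) * χ (∑ a, u a * G a i) =
        ∑ a, ∑ b, ∑ c, φ (u a) * ψ (u b) * χ (u c) *
          (φ (G a i) * ψ (G b i) * χ (G c i)) := by
    simp only [map_sum, map_mul]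
    rw [Finset.sum_mul_sum]
    simp_rw [Finset.sum_mul, Finset.mul_sum]
    exact Finset.sum_congr rfl fun a _ ↦ Finset.sum_congr rfl fun b _ ↦
      Finset.sum_congr rfl fun c _ ↦ by ring
  simp only [expand, Finset.mul_sum]
  rw [Finset.sum_comm]
  refine Finset.sum_congr rfl fun a _ ↦ ?_
  rw [Finset.sum_comm]
  exact Finset.sum_congr rfl fun b _ ↦ Finset.sum_comm

theorem sum_map_mul_map_mul_map_linearCombination_of_diagonal [DecidableEq ι] (d : ι → S)
    (hG : ∀ a b c, ∑ i, φ (G a i) * ψ (G b i) * χ (G c i) =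
      if a = b ∧ b = c then d a else 0) :
    ∑ i, φ (∑ a, u a * G a i) * ψ (∑ a, u a * G a i) * χ (∑ a, u a * G a i) =
      ∑ a, φ (u a) * ψ (u a) * χ (u a) * d a := by
  simp only [sum_map_mul_map_mul_map_linearCombination, hG, ite_and, mul_ite, mul_zero,
    Finset.sum_ite_irrel, Finset.sum_const_zero, Finset.sum_ite_eq, Finset.mem_univ, if_true]

end TripleProducts

theorem sum_ite_val_lt_eq_sum_castLE {M : Type*} [AddCommMonoid M] {m k : ℕ} (hkm : k ≤ m)
    (f : Fin m → M) :
    ∑ a : Fin m, (if (a : ℕ) < k then f a else 0) = ∑ a : Fin k, f (Fin.castLE hkm a) := by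
  refine (Fintype.sum_of_injective (Fin.castLE hkm) (Fin.castLE_injective hkm) _ _ ?_ ?_).symm
  · intro a ha
    exact if_neg fun h ↦ ha ⟨⟨a, h⟩, rfl⟩
  · intro a
    exact (if_pos a.isLt).symm

theorem pow_sq_add_self_add_one_eq_frobenius_mul {R : Type*} [CommSemiring R] (p : ℕ)
    [ExpChar R p] (x : R) :
    x ^ (p ^ 2 + p + 1) = iterateFrobenius R p 2 x * frobenius R p x * RingHom.id R x := by
  rw [pow_succ, pow_add, iterateFrobenius_def, frobenius_def, RingHom.id_apply]

theorem sum_seventh_powers_of_rowspan_general {R κ : Type*} [CommSemiring R] {p : ℕ} [ExpChar R p]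
    [Fintype κ] {m k : ℕ} (hkm : k ≤ m) (G : Fin m → κ → R)
    (hG : ∀ a b c, ∑ i, G a i ^ p ^ 2 * G b i ^ p * G c i =
      if a = b ∧ b = c ∧ (a : ℕ) < k then 1 else 0) (u : Fin m → R) :
    ∑ i, (∑ a, u a * G a i) ^ (p ^ 2 + p + 1) =
      ∑ a : Fin k, u (Fin.castLE hkm a) ^ (p ^ 2 + p + 1) := by
  have diagonal (a b c : Fin m) :
      ∑ i, iterateFrobenius R p 2 (G a i) * frobenius R p (G b i) * RingHom.id R (G c i) =
        if a = b ∧ b = c then (if (a : ℕ) < k then 1 else 0) else 0 := by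
    simpa only [iterateFrobenius_def, frobenius_def, RingHom.id_apply, ← ite_and, and_assoc]
      using hG a b c
  simp only [pow_sq_add_self_add_one_eq_frobenius_mul]
  rw [sum_map_mul_map_mul_map_linearCombination_of_diagonal _ _ _ G u _ diagonal]
  simp only [mul_ite, mul_one, mul_zero, sum_ite_val_lt_eq_sum_castLE hkm]

/-- For `G` triorthogonal with parameter `k`: any element `f = Σ_a u_a g^a` of the
row span satisfies `Σ_i f_i^7 = Σ_{a=1}^k u_a^7`. -/
theorem sum_seventh_powers_of_rowspan
    {s m n k : ℕ} (hs : 1 ≤ s) (hk : 1 ≤ k) (hkm : k ≤ m)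
    {F : Type} [Field F] [Fintype F] (hF : Fintype.card F = 2 ^ s)
    (G : Fin m → Fin n → F) (σ : Fin n → F) (τ : Fin k → F)
    (hG : IsTriorthogonal G σ τ) (u : Fin m → F) :
    ∑ i, (∑ a, u a * G a i) ^ 7 = ∑ a : Fin k, u (Fin.castLE hkm a) ^ 7 := by
  have : CharP F 2 := charP_of_card_eq_prime_pow hF
  exact sum_seventh_powers_of_rowspan_general (p := 2) hkm G hG.2.2.1 u
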